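/- arXiv:2602.18680 — 7 statements merged into one kernel-verified Lean document; each statement's English description precedes it below -/
import Mathlib

section
/- For all positive integers x, y, z one has x : (y : z) = ((x·z) : y) / (z : y) = gcd(x·y, x·z) / gcd(y, x·z), where all indicated divisions are exact; equivalently, (x : (y : z))·(z : y) = (x·z) : y and (x : (y : z))·gcd(y, x·z) = gcd(x·y, x·z). -/
/-- The colon operation on positive integers: `x : y = x / gcd(x,y)` (exact division). -/
def colon (x y : ℕ) : ℕ := x / Nat.gcd x y

/-- `x : (y : z) = ((x·z) : y) / (z : y) = gcd(x·y, x·z) / gcd(y, x·z)`, where all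
indicated divisions are exact; equivalently, `(x : (y : z))·(z : y) = (x·z) : y` and
`(x : (y : z))·gcd(y, x·z) = gcd(x·y, x·z)`. -/
theorem colon_colon_right (x y z : ℕ) (hx : 0 < x) (hy : 0 < y) (hz : 0 < z) :
    colon z y ∣ colon (x * z) y ∧
    Nat.gcd y (x * z) ∣ Nat.gcd (x * y) (x * z) ∧
    colon x (colon y z) = colon (x * z) y / colon z y ∧
    colon x (colon y z) = Nat.gcd (x * y) (x * z) / Nat.gcd y (x * z) ∧
    colon x (colon y z) * colon z y = colon (x * z) y ∧
    colon x (colon y z) * Nat.gcd y (x * z) = Nat.gcd (x * y) (x * z) := by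
  have hg : 0 < Nat.gcd y z := Nat.gcd_pos_of_pos_left _ hy
  obtain ⟨g, b, c, hg0, hbc, rfl, rfl⟩ := Nat.exists_coprime' hg
  have hb : 0 < b := Nat.pos_of_mul_pos_right hy
  have hc : 0 < c := Nat.pos_of_mul_pos_right hz
  have hd : 0 < Nat.gcd x b := Nat.gcd_pos_of_pos_left _ hx
  obtain ⟨d, a, e, hd0, hae, rfl, rfl⟩ := Nat.exists_coprime' hd
  have hgbc : Nat.gcd (e * d * g) (c * g) = g := by
    rw [Nat.gcd_mul_right, hbc.gcd_eq_one, one_mul]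
  have h1 : colon (e * d * g) (c * g) = e * d := by
    unfold colon
    rw [hgbc, Nat.mul_div_cancel _ hg0]
  have h2 : colon (c * g) (e * d * g) = c := by
    unfold colon
    rw [Nat.gcd_comm, hgbc, Nat.mul_div_cancel _ hg0]
  have h3 : colon (a * d) (e * d) = a := by
    unfold colon
    rw [Nat.gcd_mul_right, hae.gcd_eq_one, one_mul, Nat.mul_div_cancel _ hd0]
  have h4 : Nat.gcd (e * d * g) (a * d * (c * g)) = d * g := by
    rw [← mul_assoc, Nat.gcd_mul_right, Nat.Coprime.gcd_mul_right_cancel_right _ hbc.symm,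
      Nat.gcd_mul_right, hae.symm.gcd_eq_one, one_mul]
  have h5 : colon (a * d * (c * g)) (e * d * g) = a * c := by
    unfold colon
    rw [Nat.gcd_comm, h4, show a * d * (c * g) = a * c * (d * g) by ring,
      Nat.mul_div_cancel _ (Nat.mul_pos hd0 hg0)]
  have h6 : Nat.gcd (a * d * (e * d * g)) (a * d * (c * g)) = a * (d * g) := by
    rw [Nat.gcd_mul_left, hgbc, mul_assoc]
  rw [h1, h2, h3, h4, h5, h6]
  exact ⟨Dvd.intro_left _ rfl, Dvd.intro_left _ rfl, (Nat.mul_div_cancel _ hc).symm,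
    (Nat.mul_div_cancel _ (Nat.mul_pos hd0 hg0)).symm, rfl, rfl⟩
end

section
/- For all positive integers x, y, z one has (x : y) / (x : (y : z)) = gcd(y, x·z) / (gcd(x,y)·gcd(y,z)) as an identity of rational numbers; equivalently, (x : y)·gcd(x, y)·gcd(y, z) = (x : (y : z))·gcd(y, x·z) in the positive integers. -/
/-- `(x : y) / (x : (y : z)) = gcd(y, x·z) / (gcd(x,y)·gcd(y,z))` as rational numbers;
equivalently `(x : y)·gcd(x,y)·gcd(y,z) = (x : (y : z))·gcd(y, x·z)` in the positive
integers. -/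
theorem colon_div_colon (x y z : ℕ) (hx : 0 < x) (hy : 0 < y) (hz : 0 < z) :
    ((colon x y : ℚ) / (colon x (colon y z) : ℚ) =
      (Nat.gcd y (x * z) : ℚ) / ((Nat.gcd x y : ℚ) * (Nat.gcd y z : ℚ))) ∧
    colon x y * Nat.gcd x y * Nat.gcd y z = colon x (colon y z) * Nat.gcd y (x * z) := by
  have key : colon x y * Nat.gcd x y * Nat.gcd y z
      = colon x (colon y z) * Nat.gcd y (x * z) := by
    unfold colon
    rw [Nat.div_mul_cancel (Nat.gcd_dvd_left x y)]
    obtain ⟨g, y', z', hg, hco, hy', hz'⟩ := Nat.exists_coprime' (m := y) (n := z)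
      (Nat.gcd_pos_of_pos_left z hy)
    have hgcd : Nat.gcd y z = g := by
      rw [hy', hz', Nat.gcd_mul_right, hco.gcd_eq_one, one_mul]
    have hdiv : y / g = y' := by
      rw [hy', Nat.mul_div_cancel _ hg]
    have hG : Nat.gcd y (x * z) = Nat.gcd x y' * g := by
      rw [hy', hz', ← mul_assoc, Nat.gcd_mul_right,
        Nat.Coprime.gcd_mul_right_cancel_right x hco.symm, Nat.gcd_comm]
    rw [hgcd, hdiv, hG, ← mul_assoc, Nat.div_mul_cancel (Nat.gcd_dvd_left x y')]
  refine ⟨?_, key⟩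
  have hb : colon x (colon y z) ≠ 0 :=
    (Nat.div_pos (Nat.gcd_le_left _ hx) (Nat.gcd_pos_of_pos_left _ hx)).ne'
  have hd : Nat.gcd x y ≠ 0 := (Nat.gcd_pos_of_pos_left _ hx).ne'
  have he : Nat.gcd y z ≠ 0 := (Nat.gcd_pos_of_pos_left _ hy).ne'
  have key' : (colon x y : ℚ) * Nat.gcd x y * Nat.gcd y z
      = colon x (colon y z) * Nat.gcd y (x * z) := by exact_mod_cast key
  rw [div_eq_div_iff (by exact_mod_cast hb)
    (mul_ne_zero (by exact_mod_cast hd) (by exact_mod_cast he))]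
  linarith
end

section
/- For every list b = (b_1, …, b_s) of positive integers and every 1 ≤ j ≤ s−1, the integer (b; j) divides (b; j+1). In particular (b; 1) = gcd(b_1, …, b_s), (b; s) = lcm(b_1, …, b_s), and the list ((b;1), (b;2), …, (b;s)) is a divisor string. -/
/-- The least common multiple of the entries of a list of naturals. -/
def lcmList (l : List ℕ) : ℕ := l.foldr Nat.lcm 1

/-- The greatest common divisor of the entries of a list of naturals. -/
def gcdList (l : List ℕ) : ℕ := l.foldr Nat.gcd 0

/-- `(b; j)`: the gcd of the lcms of all length-`j` sublists (i.e. subsequences,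
corresponding to index sets `i₁ < ⋯ < i_j`) of `b`. -/
def lcmGcd (b : List ℕ) (j : ℕ) : ℕ :=
  gcdList (((b.sublists).filter (fun s => s.length == j)).map lcmList)

theorem dvd_gcdList_iff (d : ℕ) (l : List ℕ) : d ∣ gcdList l ↔ ∀ x ∈ l, d ∣ x := by
  unfold gcdList
  induction l with
  | nil => simp
  | cons a l ih => simp [Nat.dvd_gcd_iff, ih]

theorem lcmList_dvd_iff (d : ℕ) (l : List ℕ) : lcmList l ∣ d ↔ ∀ x ∈ l, x ∣ d := by
  unfold lcmList
  induction l with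
  | nil => simp
  | cons a l ih => simp [Nat.lcm_dvd_iff, ih]

theorem dvd_lcmGcd_iff (d : ℕ) (b : List ℕ) (j : ℕ) :
    d ∣ lcmGcd b j ↔ ∀ l : List ℕ, l.Sublist b → l.length = j → d ∣ lcmList l := by
  unfold lcmGcd
  rw [dvd_gcdList_iff]
  simp
  exact ⟨fun h l h1 h2 => h _ l h1 h2 rfl, fun h x l h1 h2 h3 => h3 ▸ h l h1 h2⟩

theorem lcmGcd_dvd_step (b : List ℕ) (j : ℕ) : lcmGcd b j ∣ lcmGcd b (j + 1) := by
  rw [dvd_lcmGcd_iff]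
  intro l hl hlen
  have h1 : lcmGcd b j ∣ lcmList l.tail :=
    (dvd_lcmGcd_iff _ b j).1 dvd_rfl l.tail ((List.tail_sublist l).trans hl) (by simp [hlen])
  refine h1.trans ?_
  rw [lcmList_dvd_iff]
  intro x hx
  exact (lcmList_dvd_iff _ l).1 dvd_rfl x (List.mem_of_mem_tail hx)

/-- For a list `b = (b₁, …, b_s)` of positive integers and `1 ≤ j ≤ s−1` one has
`(b;j) ∣ (b;j+1)`.  In particular `(b;1) = gcd(b₁,…,b_s)`, `(b;s) = lcm(b₁,…,b_s)`,
and the list `((b;1),…,(b;s))` is a divisor string. -/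
theorem lcmGcd_dvd_succ (b : List ℕ) (hne : b ≠ []) (hpos : ∀ x ∈ b, 0 < x) :
    (∀ j, 1 ≤ j → j ≤ b.length - 1 → lcmGcd b j ∣ lcmGcd b (j + 1)) ∧
    lcmGcd b 1 = gcdList b ∧
    lcmGcd b b.length = lcmList b ∧
    List.Chain' (· ∣ ·) ((List.range b.length).map fun j => lcmGcd b (j + 1)) := by
  refine ⟨fun j _ _ => lcmGcd_dvd_step b j, ?_, ?_, ?_⟩
  · have key : ∀ d, d ∣ lcmGcd b 1 ↔ d ∣ gcdList b := by
      intro d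
      rw [dvd_lcmGcd_iff, dvd_gcdList_iff]
      constructor
      · intro h x hx
        have := h [x] (List.singleton_sublist.2 hx) rfl
        simpa [lcmList] using this
      · intro h l hl hlen
        obtain ⟨x, rfl⟩ := List.length_eq_one_iff.1 hlen
        have := h x (List.singleton_sublist.1 hl)
        simpa [lcmList] using this
    exact Nat.dvd_antisymm ((key _).1 dvd_rfl) ((key _).2 dvd_rfl)
  · apply Nat.dvd_antisymm
    · exact (dvd_lcmGcd_iff _ b _).1 dvd_rfl b (List.Sublist.refl b) rfl
    · rw [dvd_lcmGcd_iff]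
      intro l hl hlen
      rw [hl.eq_of_length hlen]
  · refine List.isChain_iff_getElem.2 ?_
    intro i hi
    simpa using lcmGcd_dvd_step b (i + 1)
end

section
/- Let B be a multiset of positive integers of size s, let x and y be two elements of B (counted with multiplicity), and let B′ be the multiset obtained from B by removing x and y and inserting gcd(x, y) and lcm(x, y). Then for every 1 ≤ j ≤ s one has (B; j) = (B′; j), i.e., the gcd over all size-j sub-multisets of the lcm of the sub-multiset is unchanged by the move x, y ↦ gcd(x,y), lcm(x,y). Consequently, iterating this move on a multiset always stabilizes (once every element divides the lcm-gcd chain) at the same divisor string ((B;1), …, (B;s)). -/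
/-- `(B; j)` for a multiset `B` of naturals: the gcd of the lcms of all size-`j`
sub-multisets of `B`. -/
def lcmGcdM (B : Multiset ℕ) (j : ℕ) : ℕ :=
  ((B.powerset.filter (fun s => Multiset.card s = j)).map Multiset.lcm).gcd

theorem nat_gcd_lcm_distrib (x y t : ℕ) (hx : 0 < x) (hy : 0 < y) (ht : t ≠ 0) :
    Nat.gcd (Nat.lcm x t) (Nat.lcm y t) = Nat.lcm (Nat.gcd x y) t := by
  have hg : Nat.gcd x y ≠ 0 := (Nat.gcd_pos_of_pos_left _ hx).ne'
  have h1 : Nat.lcm x t ≠ 0 := Nat.lcm_ne_zero hx.ne' ht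
  have h2 : Nat.lcm y t ≠ 0 := Nat.lcm_ne_zero hy.ne' ht
  have h3 : Nat.lcm (Nat.gcd x y) t ≠ 0 := Nat.lcm_ne_zero hg ht
  apply Nat.eq_of_factorization_eq (Nat.gcd_ne_zero_left h1) h3
  intro p
  rw [Nat.factorization_gcd h1 h2, Nat.factorization_lcm hx.ne' ht,
    Nat.factorization_lcm hy.ne' ht, Nat.factorization_lcm hg ht,
    Nat.factorization_gcd hx.ne' hy.ne']
  simp only [Finsupp.inf_apply, Finsupp.sup_apply]
  exact sup_inf_right .. |>.symm

theorem dvd_lcmGcdM (B : Multiset ℕ) (j d : ℕ) :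
    d ∣ lcmGcdM B j ↔ ∀ s ∈ Multiset.powersetCard j B, d ∣ s.lcm := by
  simp only [lcmGcdM, Multiset.dvd_gcd, Multiset.mem_map, Multiset.mem_filter,
    Multiset.mem_powerset, Multiset.mem_powersetCard]
  constructor
  · intro h s hs
    exact h _ ⟨s, hs, rfl⟩
  · rintro h _ ⟨s, hs, rfl⟩
    exact h s hs

theorem forall_lcm_pair (x y d : ℕ) (hx : 0 < x) (hy : 0 < y) (t : Multiset ℕ)
    (ht : t.lcm ≠ 0) :
    (d ∣ (x ::ₘ t).lcm ∧ d ∣ (y ::ₘ t).lcm) ↔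
      (d ∣ (Nat.gcd x y ::ₘ t).lcm ∧ d ∣ (Nat.lcm x y ::ₘ t).lcm) := by
  simp only [Multiset.lcm_cons]
  change (d ∣ Nat.lcm x t.lcm ∧ d ∣ Nat.lcm y t.lcm) ↔
    (d ∣ Nat.lcm (Nat.gcd x y) t.lcm ∧ d ∣ Nat.lcm (Nat.lcm x y) t.lcm)
  rw [← Nat.dvd_gcd_iff, nat_gcd_lcm_distrib x y _ hx hy ht]
  refine ⟨fun h => ⟨h, h.trans ?_⟩, fun h => h.1⟩
  exact lcm_dvd_lcm ((Nat.gcd_dvd_left x y).trans (Nat.dvd_lcm_left x y)) dvd_rfl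

theorem lcm_pair_pair (x y : ℕ) (t : Multiset ℕ) :
    (Nat.gcd x y ::ₘ Nat.lcm x y ::ₘ t).lcm = (x ::ₘ y ::ₘ t).lcm := by
  simp only [Multiset.lcm_cons]
  change Nat.lcm (Nat.gcd x y) (Nat.lcm (Nat.lcm x y) t.lcm) = Nat.lcm x (Nat.lcm y t.lcm)
  rw [← Nat.lcm_assoc x]
  apply Nat.lcm_eq_right
  exact ((Nat.gcd_dvd_left x y).trans (Nat.dvd_lcm_left x y)).trans (Nat.dvd_lcm_left _ _)

theorem dvd_cons_cons (x y d n : ℕ) (C : Multiset ℕ) :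
    d ∣ lcmGcdM (x ::ₘ y ::ₘ C) (n + 1) ↔
      (∀ t ∈ Multiset.powersetCard (n + 1) C, d ∣ t.lcm) ∧
      (∀ t ∈ Multiset.powersetCard n C, d ∣ (x ::ₘ t).lcm ∧ d ∣ (y ::ₘ t).lcm) ∧
      (∀ m, n = m + 1 → ∀ t ∈ Multiset.powersetCard m C, d ∣ (x ::ₘ y ::ₘ t).lcm) := by
  rw [dvd_lcmGcdM]
  cases n with
  | zero =>
    simp [Multiset.powersetCard_cons, or_imp, forall_and, -Multiset.lcm_cons]
    tauto
  | succ m =>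
    simp only [Multiset.powersetCard_cons, Multiset.mem_add, Multiset.mem_map, or_imp,
      forall_and, Multiset.map_add, Multiset.map_map, Function.comp, forall_exists_index, and_imp,
      forall_apply_eq_imp_iff₂, Nat.add_right_cancel_iff, forall_eq']
    tauto

/-- Replacing two elements `x, y` of a multiset `B` of positive integers (counted with
multiplicity) by `gcd(x,y)` and `lcm(x,y)` leaves all the invariants `(B; j)`
(for `1 ≤ j ≤ |B|`) unchanged. -/
theorem lcmGcdM_gcd_lcm_move (B : Multiset ℕ) (hpos : ∀ x ∈ B, 0 < x)
    (x y : ℕ) (hx : x ∈ B) (hy : y ∈ B.erase x)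
    (j : ℕ) (h1 : 1 ≤ j) (h2 : j ≤ Multiset.card B) :
    lcmGcdM B j = lcmGcdM (Nat.gcd x y ::ₘ Nat.lcm x y ::ₘ (B.erase x).erase y) j := by
  obtain ⟨n, rfl⟩ : ∃ n, j = n + 1 := ⟨j - 1, by omega⟩
  have hB : B = x ::ₘ y ::ₘ (B.erase x).erase y := by
    rw [Multiset.cons_erase hy, Multiset.cons_erase hx]
  have hx0 : 0 < x := hpos x hx
  have hy0 : 0 < y := hpos y (Multiset.mem_of_mem_erase hy)
  have hC : ∀ z ∈ (B.erase x).erase y, 0 < z := fun z hz =>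
    hpos z (Multiset.mem_of_mem_erase (Multiset.mem_of_mem_erase hz))
  generalize (B.erase x).erase y = C at hB hC
  subst hB
  refine Nat.dvd_left_iff_eq.1 fun d => ?_
  rw [dvd_cons_cons, dvd_cons_cons]
  simp only [lcm_pair_pair]
  refine and_congr Iff.rfl (and_congr (forall₂_congr fun t ht => ?_) Iff.rfl)
  refine forall_lcm_pair x y d hx0 hy0 t ?_
  rw [Ne, Multiset.lcm_eq_zero_iff]
  intro h0
  exact (hC 0 (Multiset.mem_of_le (Multiset.mem_powersetCard.1 ht).1 h0)).false
end

section
/- Let c = (c_1, …, c_k) and d = (d_1, …, d_k) be lists of positive integers of the same length k. Then Y_{c,d} = 1 if either of the following conditions holds: (1) for every 1 ≤ j ≤ k the product c_j·c_{j+1}⋯c_k divides d_j·d_{j+1}⋯d_k; or (2) k ≥ 2 and c_{k−1}·c_k divides d_k. -/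
/-- The recursively defined quantities `Y_j`: `Y₀ = 1` and
`Y_j = gcd((c_j·Y_{j−1}) / gcd(c_j·Y_{j−1}, d_j), c_j)`. -/
def Yaux (c d : List ℕ) : ℕ → ℕ
  | 0 => 1
  | j + 1 =>
      Nat.gcd ((c.getD j 1 * Yaux c d j) / Nat.gcd (c.getD j 1 * Yaux c d j) (d.getD j 1))
        (c.getD j 1)

/-- `Y_{c,d} := Y_k` where `k` is the common length of `c` and `d`. -/
def Ycd (c d : List ℕ) : ℕ := Yaux c d c.length

theorem step_dvd {a d C D : ℕ} (ha : 0 < a) (hC : 0 < C) (h1 : C ∣ D) (h2 : a * C ∣ d * D) :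
    a / Nat.gcd a d * C ∣ D := by
  obtain ⟨E, rfl⟩ := h1
  have hg : 0 < Nat.gcd a d := Nat.gcd_pos_of_pos_left _ ha
  have h3 : a ∣ d * E := by
    apply Nat.dvd_of_mul_dvd_mul_right hC
    convert h2 using 1
    ring
  have hco := Nat.coprime_div_gcd_div_gcd hg
  have h4 : a / Nat.gcd a d ∣ d / Nat.gcd a d * E := by
    apply Nat.dvd_of_mul_dvd_mul_left hg
    rw [Nat.mul_div_cancel' (Nat.gcd_dvd_left a d), ← mul_assoc,
      Nat.mul_div_cancel' (Nat.gcd_dvd_right a d)]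
    exact h3
  rw [mul_comm C E]
  exact Nat.mul_dvd_mul_right (hco.dvd_of_dvd_mul_left h4) C

theorem getD_pos {c : List ℕ} (hc : ∀ x ∈ c, 0 < x) (j : ℕ) : 0 < c.getD j 1 := by
  by_cases hj : j < c.length
  · rw [List.getD_eq_getElem _ _ hj]
    exact hc _ (List.getElem_mem hj)
  · rw [List.getD_eq_default _ _ (by omega)]
    exact one_pos

theorem drop_prod (c : List ℕ) (j : ℕ) :
    (c.drop j).prod = c.getD j 1 * (c.drop (j + 1)).prod := by
  by_cases hj : j < c.length
  · rw [List.getD_eq_getElem _ _ hj, List.drop_eq_getElem_cons hj, List.prod_cons]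
  · rw [List.getD_eq_default _ _ (by omega), List.drop_eq_nil_of_le (by omega),
      List.drop_eq_nil_of_le (by omega)]
    simp

theorem Yaux_pos {c d : List ℕ} (hc : ∀ x ∈ c, 0 < x) (j : ℕ) : 0 < Yaux c d j := by
  cases j with
  | zero => exact one_pos
  | succ j => exact Nat.gcd_pos_of_pos_right _ (getD_pos hc j)

theorem Yaux_inv {c d : List ℕ} (hc : ∀ x ∈ c, 0 < x)
    (h : ∀ j, (c.drop j).prod ∣ (d.drop j).prod) (j : ℕ) :
    Yaux c d j * (c.drop j).prod ∣ (d.drop j).prod := by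
  induction j with
  | zero => simpa [Yaux] using h 0
  | succ j ih =>
    rw [drop_prod c j, drop_prod d j] at ih
    refine (Nat.mul_dvd_mul_right (Nat.gcd_dvd_left _ _) _).trans
      (step_dvd (Nat.mul_pos (getD_pos hc j) (Yaux_pos hc j)) ?_ (h _) ?_)
    · exact List.prod_pos fun x hx => hc x (List.mem_of_mem_drop hx)
    · convert ih using 1
      ring

/-- `Y_{c,d} = 1` if either (1) `c_j·c_{j+1}⋯c_k ∣ d_j·d_{j+1}⋯d_k` for every
`1 ≤ j ≤ k`, or (2) `k ≥ 2` and `c_{k−1}·c_k ∣ d_k`. -/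
theorem Ycd_eq_one (k : ℕ) (c d : List ℕ) (hck : c.length = k) (hdk : d.length = k)
    (hc : ∀ x ∈ c, 0 < x) (hd : ∀ x ∈ d, 0 < x)
    (h : (∀ j, 1 ≤ j → j ≤ k → (c.drop (j - 1)).prod ∣ (d.drop (j - 1)).prod) ∨
      (2 ≤ k ∧ c.getD (k - 2) 1 * c.getD (k - 1) 1 ∣ d.getD (k - 1) 1)) :
    Ycd c d = 1 := by
  rcases h with h | ⟨hk, h⟩
  · have h' : ∀ j, (c.drop j).prod ∣ (d.drop j).prod := by
      intro j
      by_cases hj : j < k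
      · exact h (j + 1) (by omega) (by omega)
      · rw [List.drop_eq_nil_of_le (by omega)]
        simp
    have := Yaux_inv hc h' k
    rw [List.drop_eq_nil_of_le (by omega), List.drop_eq_nil_of_le (by omega)] at this
    unfold Ycd
    rw [hck]
    simpa using this
  · obtain ⟨n, rfl⟩ : ∃ n, k = n + 2 := ⟨k - 2, by omega⟩
    have e1 : n + 2 - 2 = n := by omega
    have e2 : n + 2 - 1 = n + 1 := by omega
    rw [e1, e2] at h
    have hY : Yaux c d (n + 1) ∣ c.getD n 1 := Nat.gcd_dvd_right _ _
    have h2 : c.getD (n + 1) 1 * Yaux c d (n + 1) ∣ d.getD (n + 1) 1 := by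
      refine dvd_trans ?_ h
      rw [mul_comm]
      exact Nat.mul_dvd_mul_right hY _
    unfold Ycd
    rw [hck, Yaux, Nat.gcd_eq_left h2,
      Nat.div_self (Nat.mul_pos (getD_pos hc _) (Yaux_pos hc _)), Nat.gcd_one_left]
end

section
/- Let c = (c_1, …, c_k) and d = (d_1, …, d_k) be divisor strings of the same length k ≥ 1 (that is, c_i ∣ c_{i+1} and d_i ∣ d_{i+1} for all 1 ≤ i ≤ k−1). If Y_{c,d} = 1, then c_k divides d_k. -/
/-- If `c` and `d` are divisor strings of the same length `k ≥ 1` and `Y_{c,d} = 1`,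
then `c_k ∣ d_k`. -/
theorem last_dvd_of_Ycd_eq_one (k : ℕ) (hk : 1 ≤ k) (c d : List ℕ)
    (hck : c.length = k) (hdk : d.length = k)
    (hc : ∀ x ∈ c, 0 < x) (hd : ∀ x ∈ d, 0 < x)
    (hcchain : List.Chain' (· ∣ ·) c) (hdchain : List.Chain' (· ∣ ·) d)
    (hY : Ycd c d = 1) :
    c.getD (k - 1) 1 ∣ d.getD (k - 1) 1 := by
  obtain ⟨j, rfl⟩ : ∃ j, k = j + 1 := ⟨k - 1, by omega⟩
  rw [Ycd, hck, Yaux] at hY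
  rw [Nat.add_sub_cancel]
  have hX := Nat.div_mul_cancel (Nat.gcd_dvd_left (c.getD j 1 * Yaux c d j) (d.getD j 1))
  have hcop : Nat.Coprime (c.getD j 1)
      ((c.getD j 1 * Yaux c d j) / Nat.gcd (c.getD j 1 * Yaux c d j) (d.getD j 1)) :=
    Nat.Coprime.symm hY
  have h1 := hcop.dvd_of_dvd_mul_left ((Dvd.intro _ rfl).trans (dvd_of_eq hX.symm))
  exact h1.trans (Nat.gcd_dvd_right _ _)
end

section
/- Let c = (c_1, …, c_k) and d = (d_1, …, d_k) be divisor strings of the same length k ≥ 1 (that is, c_i ∣ c_{i+1} and d_i ∣ d_{i+1} for all 1 ≤ i ≤ k−1). If Y_{c,d} = 1 and Y_{d,c} = 1, then c_i = d_i for every i, i.e., the two divisor strings are equal. -/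
/-- Exponent version of the recursion. -/
def yexp (a b : ℕ → ℕ) : ℕ → ℕ
  | 0 => 0
  | j + 1 => min (a j + yexp a b j - b j) (a j)

lemma yexp_eq (a b : ℕ → ℕ) (n : ℕ) (ha : ∀ i j, i ≤ j → j < n → a i ≤ a j)
    (hb : ∀ i j, i ≤ j → j < n → b i ≤ b j) (h1 : yexp a b n = 0) (h2 : yexp b a n = 0) :
    ∀ i < n, a i = b i := by
  induction n with
  | zero => intro i hi; omega
  | succ m ih =>
    intro i hi
    simp only [yexp] at h1 h2
    by_cases h0 : a m = 0 ∨ b m = 0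
    · have := ha i m (by omega) (by omega)
      have := hb i m (by omega) (by omega)
      omega
    · have e : a m = b m := by omega
      rcases Nat.lt_succ_iff_lt_or_eq.mp hi with h | h
      · exact ih (fun i j hij hj => ha i j hij (by omega)) (fun i j hij hj => hb i j hij (by omega))
          (by omega) (by omega) i h
      · rw [h, e]

lemma Yaux_fact (c d : List ℕ) (hc : ∀ j, c.getD j 1 ≠ 0) (hd : ∀ j, d.getD j 1 ≠ 0) (p n : ℕ) :
    Yaux c d n ≠ 0 ∧ (Yaux c d n).factorization p =
      yexp (fun j => (c.getD j 1).factorization p) (fun j => (d.getD j 1).factorization p) n := by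
  induction n with
  | zero => simp [Yaux, yexp]
  | succ m ih =>
    obtain ⟨h0, ih⟩ := ih
    have hcy := mul_ne_zero (hc m) h0
    have hq : (c.getD m 1 * Yaux c d m) / Nat.gcd (c.getD m 1 * Yaux c d m) (d.getD m 1) ≠ 0 :=
      (Nat.div_pos (Nat.le_of_dvd (Nat.pos_of_ne_zero hcy) (Nat.gcd_dvd_left _ _))
        (Nat.gcd_pos_of_pos_left _ (Nat.pos_of_ne_zero hcy))).ne'
    refine ⟨Nat.gcd_ne_zero_right (hc m), ?_⟩
    simp only [Yaux, yexp]
    rw [Nat.factorization_gcd hq (hc m), Finsupp.inf_apply,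
      Nat.factorization_div (Nat.gcd_dvd_left _ _), Finsupp.tsub_apply,
      Nat.factorization_gcd hcy (hd m), Finsupp.inf_apply,
      Nat.factorization_mul (hc m) h0, Finsupp.add_apply, ih]
    omega

lemma getD_ne (c : List ℕ) (hc : ∀ x ∈ c, 0 < x) (j : ℕ) : c.getD j 1 ≠ 0 := by
  by_cases h : j < c.length
  · rw [List.getD_eq_getElem _ _ h]
    exact (hc _ (List.getElem_mem h)).ne'
  · rw [List.getD_eq_default _ _ (by omega)]; simp

lemma getD_dvd (c : List ℕ) (hc : List.IsChain (· ∣ ·) c) (i j : ℕ) (hij : i ≤ j)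
    (hj : j < c.length) : c.getD i 1 ∣ c.getD j 1 := by
  rcases hij.eq_or_lt with h | h
  · rw [h]
  · rw [List.getD_eq_getElem _ _ hj, List.getD_eq_getElem _ _ (by omega)]
    exact List.pairwise_iff_getElem.mp (List.isChain_iff_pairwise.mp hc) i j _ _ h

/-- If `c` and `d` are divisor strings of the same length `k ≥ 1` with
`Y_{c,d} = 1 = Y_{d,c}`, then `c = d`. -/
theorem eq_of_Ycd_eq_one (k : ℕ) (hk : 1 ≤ k) (c d : List ℕ)
    (hck : c.length = k) (hdk : d.length = k)
    (hc : ∀ x ∈ c, 0 < x) (hd : ∀ x ∈ d, 0 < x)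
    (hcchain : List.Chain' (· ∣ ·) c) (hdchain : List.Chain' (· ∣ ·) d)
    (hY : Ycd c d = 1) (hY' : Ycd d c = 1) :
    c = d := by
  have hc0 := getD_ne c hc
  have hd0 := getD_ne d hd
  refine List.ext_getElem (by omega) fun i h1 h2 => ?_
  have key : c.getD i 1 = d.getD i 1 := by
    refine Nat.eq_of_factorization_eq (hc0 i) (hd0 i) fun p => ?_
    have e1 := (Yaux_fact c d hc0 hd0 p k).2
    have e2 := (Yaux_fact d c hd0 hc0 p k).2
    rw [Ycd, hck] at hY
    rw [Ycd, hdk] at hY'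
    rw [hY, Nat.factorization_one, Finsupp.zero_apply] at e1
    rw [hY', Nat.factorization_one, Finsupp.zero_apply] at e2
    exact yexp_eq _ _ k
      (fun i j hij hj => (Nat.factorization_le_iff_dvd (hc0 i) (hc0 j)).mpr
        (getD_dvd c hcchain i j hij (by omega)) p)
      (fun i j hij hj => (Nat.factorization_le_iff_dvd (hd0 i) (hd0 j)).mpr
        (getD_dvd d hdchain i j hij (by omega)) p) e1.symm e2.symm i (by omega)
  rwa [List.getD_eq_getElem _ _ h1, List.getD_eq_getElem _ _ h2] at key
end
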